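/- arXiv:2002.11445 — 2 statements merged into one kernel-verified Lean document; each statement's English description precedes it below -/
import Mathlib

section
/- Let K be a field and let G = (g_{ij}) be a symmetric (N+1)×(N+1) matrix over K indexed by {0,1,…,N} with g_{00} = 1. Suppose c_1,…,c_N ∈ K are nonzero with c_i^2 = 1 − g_{0i}^2 for each i, and let G' = (g'_{ij})_{i,j=1}^N be the projected matrix with g'_{ij} = (g_{ij} − g_{0i} g_{0j})/(c_i c_j). Then every cyclic product of G' lies in the subfield of K generated by the cyclic products of G. -/
/-- The set of cyclic products of a square matrix `A`: all products of the form
`a_{i₁ i₂} a_{i₂ i₃} ⋯ a_{iₛ i₁}` with `s ≥ 1`. -/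
def cycProd {R : Type*} [CommRing R] {I : Type*} (A : Matrix I I R) : Set R :=
  {x | ∃ (s : ℕ) (idx : ℕ → I), 1 ≤ s ∧
    x = ∏ k ∈ Finset.range s, A (idx k) (idx ((k + 1) % s))}

/-!
The entry `g_{ij} - g_{i0} g_{0j}` combines the walks `i → j` and `i → 0 → j`. Multiplying such
entries around a closed walk therefore gives an integral combination of closed walk products of
`G`. Each index visited by a cyclic product of `G'` serves once as a row and once as a column, so
the denominator is a product of the `c_i ^ 2 = 1 - g_{i0} g_{0i}`, where `g_{i0} g_{0i}` is again
a cyclic product.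
-/

section Walks

variable {I J R : Type*}

/-- `IsWalkProd A i j x` says that `x` is the product of the entries of `A` along a walk from `i`
to `j`; the walk of length zero has product `1`. -/
inductive IsWalkProd [Monoid R] (A : Matrix I I R) : I → I → R → Prop
  | nil (i : I) : IsWalkProd A i i 1
  | cons (i : I) {j k : I} {x : R} : IsWalkProd A j k x → IsWalkProd A i k (A i j * x)

namespace IsWalkProd

lemma single [Monoid R] (A : Matrix I I R) (i j : I) : IsWalkProd A i j (A i j) := by
  simpa using cons i (nil (A := A) j)

lemma mul [Monoid R] {A : Matrix I I R} {i j k : I} {x y : R}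
    (hx : IsWalkProd A i j x) (hy : IsWalkProd A j k y) : IsWalkProd A i k (x * y) := by
  induction hx with
  | nil => simpa using hy
  | cons i _ ih => simpa only [mul_assoc] using (ih hy).cons i

lemma prod_range [CommMonoid R] (A : Matrix I I R) (s : ℕ) (u : ℕ → I) :
    IsWalkProd A (u 0) (u s) (∏ k ∈ Finset.range s, A (u k) (u (k + 1))) := by
  induction s generalizing u with
  | zero => simpa using nil (u 0)
  | succ s ih =>
    rw [Finset.prod_range_succ', mul_comm]
    exact (ih fun k => u (k + 1)).cons (u 0)

lemma exists_eq_prod_range [CommMonoid R] {A : Matrix I I R} {i j : I} {x : R}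
    (h : IsWalkProd A i j x) : ∃ (s : ℕ) (u : ℕ → I), u 0 = i ∧ u s = j ∧
      x = ∏ k ∈ Finset.range s, A (u k) (u (k + 1)) := by
  induction h with
  | nil i => exact ⟨0, fun _ => i, rfl, rfl, by simp⟩
  | cons i _ ih =>
    obtain ⟨s, u, rfl, rfl, rfl⟩ := ih
    refine ⟨s + 1, fun n => Nat.casesOn n i u, rfl, rfl, ?_⟩
    rw [Finset.prod_range_succ', mul_comm]
    rfl

lemma eq_one_or_mem_cycProd [CommRing R] {A : Matrix I I R} {i : I} {x : R}
    (h : IsWalkProd A i i x) : x = 1 ∨ x ∈ cycProd A := by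
  obtain ⟨s, u, h_start, h_end, rfl⟩ := h.exists_eq_prod_range
  rcases s.eq_zero_or_pos with rfl | hs
  · exact .inl (Finset.prod_range_zero _)
  · refine .inr ⟨s, u, hs, Finset.prod_congr rfl fun k hk => ?_⟩
    rcases (Nat.succ_le_of_lt (Finset.mem_range.mp hk)).lt_or_eq with hlt | rfl
    · rw [Nat.mod_eq_of_lt hlt]
    · rw [Nat.mod_self, h_start, h_end]

end IsWalkProd

lemma exists_isWalkProd_of_mem_cycProd [CommRing R] {A : Matrix I I R} {x : R}
    (hx : x ∈ cycProd A) : ∃ i, IsWalkProd A i i x := by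
  obtain ⟨s, idx, -, rfl⟩ := hx
  have h_periodic : ∏ k ∈ Finset.range s, A (idx k) (idx ((k + 1) % s)) =
      ∏ k ∈ Finset.range s, A (idx (k % s)) (idx ((k + 1) % s)) :=
    Finset.prod_congr rfl fun k hk => by rw [Nat.mod_eq_of_lt (Finset.mem_range.mp hk)]
  have h_walk := IsWalkProd.prod_range A s fun k => idx (k % s)
  rw [Nat.mod_self, Nat.zero_mod] at h_walk
  exact ⟨idx 0, h_periodic ▸ h_walk⟩

/-- The additive subgroup generated by the products of the entries of `A` along the walks from `i`
to `j`. -/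
def walkSpan [Ring R] (A : Matrix I I R) (i j : I) : AddSubgroup R :=
  AddSubgroup.closure {x | IsWalkProd A i j x}

lemma IsWalkProd.mem_walkSpan [Ring R] {A : Matrix I I R} {i j : I} {x : R}
    (h : IsWalkProd A i j x) : x ∈ walkSpan A i j :=
  AddSubgroup.subset_closure h

lemma mul_mem_walkSpan [Ring R] {A : Matrix I I R} {i j k : I} {x y : R}
    (hx : x ∈ walkSpan A i j) (hy : y ∈ walkSpan A j k) : x * y ∈ walkSpan A i k := by
  have h_walk {z : R} (hz : IsWalkProd A i j z) : z * y ∈ walkSpan A i k := by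
    suffices walkSpan A j k ≤ (walkSpan A i k).comap (AddMonoidHom.mulLeft z) from this hy
    exact (AddSubgroup.closure_le _).mpr fun w hw => (hz.mul hw).mem_walkSpan
  suffices walkSpan A i j ≤ (walkSpan A i k).comap (AddMonoidHom.mulRight y) from this hx
  exact (AddSubgroup.closure_le _).mpr fun z hz => h_walk hz

lemma IsWalkProd.mem_walkSpan_of_forall_entry_mem [Ring R] {A : Matrix I I R} {B : Matrix J J R}
    {e : J → I} (hB : ∀ i j, B i j ∈ walkSpan A (e i) (e j)) {i j : J} {x : R}
    (h : IsWalkProd B i j x) : x ∈ walkSpan A (e i) (e j) := by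
  induction h with
  | nil i => exact (nil (e i)).mem_walkSpan
  | cons i _ ih => exact mul_mem_walkSpan (hB _ _) ih

lemma mem_subringClosure_cycProd_of_mem_walkSpan [CommRing R] {A : Matrix I I R} {i : I} {x : R}
    (hx : x ∈ walkSpan A i i) : x ∈ Subring.closure (cycProd A) := by
  suffices walkSpan A i i ≤ (Subring.closure (cycProd A)).toAddSubgroup from this hx
  refine (AddSubgroup.closure_le _).mpr fun y hy => ?_
  rcases hy.eq_one_or_mem_cycProd with rfl | hy
  · exact one_mem (Subring.closure (cycProd A))
  · exact Subring.subset_closure hy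

lemma cycProd_subset_subringClosure_of_mem_walkSpan [CommRing R] {A : Matrix I I R}
    {B : Matrix J J R} {e : J → I} (hB : ∀ i j, B i j ∈ walkSpan A (e i) (e j)) :
    cycProd B ⊆ Subring.closure (cycProd A) := by
  intro x hx
  obtain ⟨i, h⟩ := exists_isWalkProd_of_mem_cycProd hx
  exact mem_subringClosure_cycProd_of_mem_walkSpan (h.mem_walkSpan_of_forall_entry_mem hB)

end Walks

lemma prod_range_succ_mod {M : Type*} [CommMonoid M] (f : ℕ → M) (s : ℕ) :
    ∏ k ∈ Finset.range s, f ((k + 1) % s) = ∏ k ∈ Finset.range s, f k := by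
  cases s with
  | zero => simp
  | succ s =>
    rw [Finset.prod_range_succ, Finset.prod_range_succ', Nat.mod_self]
    congr 1
    refine Finset.prod_congr rfl fun k hk => ?_
    rw [Nat.mod_eq_of_lt (Nat.succ_lt_succ (Finset.mem_range.mp hk))]

lemma cycProd_scale_subset {R I σ : Type*} [CommRing R] [SetLike σ R] [SubmonoidClass σ R]
    {A : Matrix I I R} {S : σ} {c d : I → R} (hcd : ∀ i, c i * d i ∈ S) (hA : cycProd A ⊆ S) :
    cycProd (Matrix.of fun i j => c i * A i j * d j) ⊆ S := by
  rintro x ⟨s, idx, hs, rfl⟩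
  have h_split : ∏ k ∈ Finset.range s, c (idx k) * A (idx k) (idx ((k + 1) % s)) *
        d (idx ((k + 1) % s)) =
      (∏ k ∈ Finset.range s, c (idx k) * d (idx k)) *
        ∏ k ∈ Finset.range s, A (idx k) (idx ((k + 1) % s)) := by
    simp only [Finset.prod_mul_distrib, prod_range_succ_mod fun k => d (idx k)]
    exact mul_right_comm _ _ _
  simp only [Matrix.of_apply, h_split]
  exact mul_mem (prod_mem fun k _ => hcd (idx k)) (hA ⟨s, idx, hs, rfl⟩)

theorem cycProd_projected_mem_subfield_closure_general {K I J : Type*} [Field K]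
    {G : Matrix I I K} {o : I} {e : J → I} {c : J → K} (hc : ∀ i, c i ≠ 0)
    (hc2 : ∀ i, c i ^ 2 = 1 - G (e i) o * G o (e i)) {G' : Matrix J J K}
    (hG' : ∀ i j, c i * G' i j * c j = G (e i) (e j) - G (e i) o * G o (e j)) :
    cycProd G' ⊆ Subfield.closure (cycProd G) := by
  have h_subring : Subring.closure (cycProd G) ≤ (Subfield.closure (cycProd G)).toSubring :=
    Subring.closure_le.mpr Subfield.subset_closure
  have h_through (i j : J) : G (e i) o * G o (e j) ∈ walkSpan G (e i) (e j) :=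
    ((IsWalkProd.single G (e i) o).mul (.single G o (e j))).mem_walkSpan
  have h_numerators : cycProd (Matrix.of fun i j => c i * G' i j * c j) ⊆
      Subring.closure (cycProd G) := by
    refine cycProd_subset_subringClosure_of_mem_walkSpan (e := e) fun i j => ?_
    rw [Matrix.of_apply, hG']
    exact sub_mem (IsWalkProd.single G (e i) (e j)).mem_walkSpan (h_through i j)
  have h_sq (i : J) : c i ^ 2 ∈ Subring.closure (cycProd G) := by
    rw [hc2]
    exact mem_subringClosure_cycProd_of_mem_walkSpan
      (sub_mem (IsWalkProd.nil (e i)).mem_walkSpan (h_through i i))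
  have h_inv (i : J) : (c i)⁻¹ * (c i)⁻¹ ∈ Subfield.closure (cycProd G) := by
    rw [← mul_inv, ← sq]
    exact inv_mem (h_subring (h_sq i))
  convert cycProd_scale_subset h_inv (h_numerators.trans h_subring) using 2
  ext i j
  simp only [Matrix.of_apply]
  field_simp [hc]

/-- Lemma 3.3 (field inclusion): every cyclic product of the projected matrix `G'`
lies in the subfield generated by the cyclic products of `G`. -/
theorem cycProd_projected_mem_subfield_closure
    (K : Type*) [Field K] (N : ℕ)
    (G : Matrix (Fin (N + 1)) (Fin (N + 1)) K) (hGsym : G.IsSymm)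
    (hG00 : G 0 0 = 1)
    (c : Fin N → K) (hc : ∀ i, c i ≠ 0)
    (hc2 : ∀ i : Fin N, (c i) ^ 2 = 1 - (G 0 i.succ) ^ 2)
    (G' : Matrix (Fin N) (Fin N) K)
    (hG' : ∀ i j : Fin N,
      G' i j = (G i.succ j.succ - G 0 i.succ * G 0 j.succ) / (c i * c j)) :
    ∀ x ∈ cycProd G', x ∈ Subfield.closure (cycProd G) := by
  have h_symm (i j) : G i j = G j i := hGsym.apply j i
  exact cycProd_projected_mem_subfield_closure_general (o := 0) (e := Fin.succ) hc
    (fun i => by rw [hc2, h_symm i.succ 0, sq])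
    (fun i j => by rw [hG', h_symm i.succ 0]; field_simp [hc])
end

section
/- For every integer m ≥ 2, the real number 1/(√2 · sin(π/(2m))) is an algebraic integer, i.e. integral over ℤ. -/
/-!
Put `θ = π / (2m)`. Integrality comes from `sin (n φ) / sin φ`, which is an integer polynomial in
the algebraic integer `2 cos φ` when `φ` is a rational multiple of `π`. If `m = 2n`, then
`n θ = π / 4`, so `1 / (√2 sin θ) = sin (n θ) / sin θ`. If `m = 2n + 1`, then `θ` and
`2n θ` are complementary, so `1 / (2 sin θ) = cos θ / sin (2θ) = sin (n · 2θ) / sin (2θ)`.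
-/

open Polynomial Real

theorem isIntegral_aeval {R A : Type*} [CommRing R] [CommRing A] [Algebra R A] {x : A}
    (hx : IsIntegral R x) (p : R[X]) : IsIntegral R (aeval x p) :=
  adjoin_le_integralClosure hx (aeval_mem_adjoin_singleton R x)

theorem isIntegral_sin_int_mul_div_sin {R : Type*} [CommRing R] [Algebra R ℝ] {θ : ℝ}
    (hθ : IsIntegral R (2 * cos θ)) (n : ℤ) : IsIntegral R (sin (n * θ) / sin θ) := by
  obtain hsin | hsin := eq_or_ne (sin θ) 0
  · simpa only [hsin, div_zero] using isIntegral_zero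
  · have hS : aeval (2 * cos θ) (Chebyshev.S R (n - 1)) = sin (n * θ) / sin θ := by
      rw [eq_div_iff hsin, Chebyshev.aeval_S, Chebyshev.S_two_mul_real_cos, Int.cast_sub,
        Int.cast_one, sub_add_cancel]
    exact hS ▸ isIntegral_aeval hθ _

theorem isIntegral_sin_int_mul_div_sin_pi_div_nat (n : ℤ) (m : ℕ) :
    IsIntegral ℤ (sin (n * (π / m)) / sin (π / m)) := by
  have hcos : IsIntegral ℤ (2 * cos (π / m)) := by
    simpa only [Rat.cast_inv, Rat.cast_natCast, inv_mul_eq_div] using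
      isIntegral_two_mul_cos_rat_mul_pi (m : ℚ)⁻¹
  exact isIntegral_sin_int_mul_div_sin hcos n

theorem isIntegral_sqrt {R : Type*} [CommRing R] [Algebra R ℝ] {x : ℝ} (hx₀ : 0 ≤ x)
    (hx : IsIntegral R x) : IsIntegral R (√x) :=
  .of_pow two_pos ((sq_sqrt hx₀).symm ▸ hx)

theorem inv_sqrt_two_mul_sin_eq_of_mul_eq_pi_div_four {a θ : ℝ} (h : a * θ = π / 4) :
    (√2 * sin θ)⁻¹ = sin (a * θ) / sin θ := by
  rw [h, sin_pi_div_four, sqrt_div_self', mul_inv, div_eq_mul_inv, one_div]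

theorem inv_sqrt_two_mul_sin_eq_of_mul_eq_pi_div_two {a θ : ℝ} (h : (2 * a + 1) * θ = π / 2)
    (hcos : cos θ ≠ 0) : (√2 * sin θ)⁻¹ = √2 * (sin (a * (2 * θ)) / sin (2 * θ)) := by
  have hcompl : sin (a * (2 * θ)) = cos θ := by
    rw [← sin_pi_div_two_sub, ← h]
    ring_nf
  calc (√2 * sin θ)⁻¹ = √2 / 2 * (sin θ)⁻¹ := by rw [mul_inv, sqrt_div_self', one_div]
    _ = √2 * (cos θ / (2 * sin θ * cos θ)) := by field_simp
    _ = √2 * (sin (a * (2 * θ)) / sin (2 * θ)) := by rw [hcompl, sin_two_mul]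

theorem isIntegral_inv_sqrt_two_mul_sin_pi_div_of_even {m : ℕ} (hm : Even m) (hm₀ : m ≠ 0) :
    IsIntegral ℤ ((√2 * sin (π / (2 * m)))⁻¹) := by
  obtain ⟨n, rfl⟩ := even_iff_exists_two_mul.mp hm
  have hn : (n : ℝ) ≠ 0 := mod_cast (mul_ne_zero_iff.mp hm₀).2
  have hangle : n * (π / (2 * ↑(2 * n))) = π / 4 := by
    push_cast
    field_simp
    norm_num
  rw [inv_sqrt_two_mul_sin_eq_of_mul_eq_pi_div_four hangle]
  exact_mod_cast isIntegral_sin_int_mul_div_sin_pi_div_nat n (2 * (2 * n))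

theorem cos_pi_div_two_mul_pos {x : ℝ} (hx : 1 < x) : 0 < cos (π / (2 * x)) := by
  have hpos : 0 < π / (2 * x) := by positivity
  have hlt : π / (2 * x) < π / 2 := div_lt_div_of_pos_left pi_pos two_pos (by linarith)
  exact cos_pos_of_mem_Ioo ⟨by linarith, hlt⟩

theorem isIntegral_inv_sqrt_two_mul_sin_pi_div_of_odd {m : ℕ} (hm : Odd m) (hm₁ : m ≠ 1) :
    IsIntegral ℤ ((√2 * sin (π / (2 * m)))⁻¹) := by
  have hm_gt : (1 : ℝ) < m := mod_cast Nat.lt_of_le_of_ne hm.pos hm₁.symm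
  obtain ⟨n, hn⟩ := hm
  have hangle : (2 * n + 1) * (π / (2 * m)) = π / 2 := by
    have hmn : (m : ℝ) = 2 * n + 1 := mod_cast hn
    rw [← hmn]
    field
  have hdouble : 2 * (π / (2 * m)) = π / m := by field
  rw [inv_sqrt_two_mul_sin_eq_of_mul_eq_pi_div_two hangle (cos_pi_div_two_mul_pos hm_gt).ne',
    hdouble]
  exact (isIntegral_sqrt zero_le_two (isIntegral_algebraMap (x := (2 : ℤ)))).mul
    (isIntegral_sin_int_mul_div_sin_pi_div_nat n m)

/-- Main step of Lemma 4.1: `τₘ⁻¹ = (√2 · sin(π/(2m)))⁻¹` is an algebraic integer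
for `m ≥ 2`. -/
theorem inv_sqrt_two_sin_isIntegral (m : ℕ) (hm : 2 ≤ m) :
    IsIntegral ℤ ((Real.sqrt 2 * Real.sin (Real.pi / (2 * m)))⁻¹) := by
  obtain heven | hodd := m.even_or_odd
  · exact isIntegral_inv_sqrt_two_mul_sin_pi_div_of_even heven (by lia)
  · exact isIntegral_inv_sqrt_two_mul_sin_pi_div_of_odd hodd (by lia)
end
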